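/- arXiv:2107.02981 — 2 statements merged into one kernel-verified Lean document; each statement's English description precedes it below -/
import Mathlib

section
/- Let d > 0 and let μ be the measure on ℝ² having density (r, φ) ↦ (r / (π d²)) · 1_{(0,d)×(−π,π)}(r, φ) with respect to the Lebesgue measure on ℝ², and let ν be the pushforward of μ under the map (r, φ) ↦ (r cos φ, r sin φ). For all real numbers i and j such that the closed square [i − 1/2, i + 1/2] × [j − 1/2, j + 1/2] is contained in the open ball {p ∈ ℝ² : ‖p‖ < d}, one has ν([i − 1/2, i + 1/2] × [j − 1/2, j + 1/2]) = 1/(π d²); in particular this probability is the same for every such grid cell (i, j). -/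
open Real MeasureTheory

/-! The Jacobian of polar coordinates is `r`, so the measure with density `r` on `(0, ∞) × (-π, π)`
pushes forward to Lebesgue measure on the plane. Cutting the radius off at `d` restricts the image
to the disc of radius `d`, and scaling by a constant `c` scales it: the image of the density `c * r`
is `c` times the area on the disc, so every unit cell inside the disc has measure `c`. -/

/-- Lebesgue measure on `(0, ∞) × (-π, π)` weighted by the Jacobian `r` of polar coordinates. -/
noncomputable def polarMeasure : Measure (ℝ × ℝ) :=
  (volume.restrict polarCoord.target).withDensity fun p => ENNReal.ofReal p.1

/-- Polar coordinates `(r, θ) ↦ (r cos θ, r sin θ)` with values in `EuclideanSpace ℝ (Fin 2)`, so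
that discs are metric balls; `polarCoord.symm` takes values in `ℝ × ℝ`, which has the sup norm. -/
noncomputable def euclideanPolar (p : ℝ × ℝ) : EuclideanSpace ℝ (Fin 2) :=
  !₂[p.1 * cos p.2, p.1 * sin p.2]

theorem measurePreserving_polarCoord_symm :
    MeasurePreserving polarCoord.symm polarMeasure volume := by
  have hmeas : Measurable polarCoord.symm := continuous_polarCoord_symm.measurable
  refine ⟨hmeas, Measure.ext fun s hs => ?_⟩
  have hpre : MeasurableSet (polarCoord.symm ⁻¹' s) := hmeas hs
  calc polarMeasure.map polarCoord.symm s
      = ∫⁻ p in polarCoord.target,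
          (polarCoord.symm ⁻¹' s).indicator (fun p => ENNReal.ofReal p.1) p := by
        rw [Measure.map_apply hmeas hs, polarMeasure, withDensity_apply _ hpre,
          lintegral_indicator hpre]
    _ = ∫⁻ p in polarCoord.target,
          ENNReal.ofReal p.1 • s.indicator 1 (polarCoord.symm p) := by
        congr 1 with p
        by_cases hp : polarCoord.symm p ∈ s <;>
          simp only [Set.indicator, Set.mem_preimage, hp, if_true, if_false, Pi.one_apply,
            smul_eq_mul, mul_one, mul_zero]
    _ = volume s := by rw [lintegral_comp_polarCoord_symm, lintegral_indicator_one hs]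

theorem measurePreserving_prod_euclideanSpace :
    MeasurePreserving (fun q : ℝ × ℝ => (!₂[q.1, q.2] : EuclideanSpace ℝ (Fin 2))) :=
  (PiLp.volume_preserving_toLp (Fin 2)).comp (volume_preserving_finTwoArrow ℝ).symm

theorem measurePreserving_euclideanPolar : MeasurePreserving euclideanPolar polarMeasure :=
  measurePreserving_prod_euclideanSpace.comp measurePreserving_polarCoord_symm

theorem norm_euclideanPolar (p : ℝ × ℝ) : ‖euclideanPolar p‖ = |p.1| := by
  rw [← sq_eq_sq₀ (norm_nonneg _) (abs_nonneg _), EuclideanSpace.real_norm_sq_eq, sq_abs,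
    Fin.sum_univ_two]
  change (p.1 * cos p.2) ^ 2 + (p.1 * sin p.2) ^ 2 = p.1 ^ 2
  linear_combination p.1 ^ 2 * sin_sq_add_cos_sq p.2

theorem euclideanPolar_preimage_ball_inter_target (d : ℝ) :
    euclideanPolar ⁻¹' Metric.ball 0 d ∩ polarCoord.target = Set.Ioo 0 d ×ˢ Set.Ioo (-π) π := by
  ext ⟨r, θ⟩
  simp only [Set.mem_inter_iff, Set.mem_preimage, mem_ball_zero_iff, norm_euclideanPolar,
    polarCoord_target, Set.mem_prod, Set.mem_Ioi, Set.mem_Ioo, ← and_assoc]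
  refine and_congr_left' (and_congr_left' ?_)
  rw [and_comm]
  exact and_congr_right fun hr => by rw [abs_of_pos hr]

theorem withDensity_mul_fst_eq_smul_restrict_polarMeasure {c : ℝ} (hc : 0 ≤ c) (d : ℝ) :
    volume.withDensity (fun p : ℝ × ℝ =>
      ENNReal.ofReal ((Set.Ioo 0 d ×ˢ Set.Ioo (-π) π).indicator (fun q => c * q.1) p)) =
    ENNReal.ofReal c • polarMeasure.restrict (euclideanPolar ⁻¹' Metric.ball 0 d) := by
  have hball : MeasurableSet (euclideanPolar ⁻¹' Metric.ball 0 d) :=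
    measurePreserving_euclideanPolar.measurable measurableSet_ball
  have hdensity : (fun p : ℝ × ℝ =>
      ENNReal.ofReal ((Set.Ioo 0 d ×ˢ Set.Ioo (-π) π).indicator (fun q => c * q.1) p)) =
      (Set.Ioo 0 d ×ˢ Set.Ioo (-π) π).indicator
        (ENNReal.ofReal c • fun q => ENNReal.ofReal q.1) := by
    rw [← Function.comp_def ENNReal.ofReal, ← Set.indicator_comp_of_zero ENNReal.ofReal_zero]
    congr 1 with q
    exact ENNReal.ofReal_mul hc
  rw [hdensity, withDensity_indicator (measurableSet_Ioo.prod measurableSet_Ioo),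
    withDensity_smul _ (by fun_prop), polarMeasure, restrict_withDensity hball,
    Measure.restrict_restrict hball, euclideanPolar_preimage_ball_inter_target]

theorem map_euclideanPolar_withDensity_mul_fst {c : ℝ} (hc : 0 ≤ c) (d : ℝ) :
    (volume.withDensity fun p : ℝ × ℝ =>
      ENNReal.ofReal ((Set.Ioo 0 d ×ˢ Set.Ioo (-π) π).indicator (fun q => c * q.1) p)).map
      euclideanPolar =
    ENNReal.ofReal c • volume.restrict (Metric.ball 0 d) := by
  rw [withDensity_mul_fst_eq_smul_restrict_polarMeasure hc, Measure.map_smul,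
    (measurePreserving_euclideanPolar.restrict_preimage measurableSet_ball).map_eq]

theorem volume_euclideanSpace_rectangle (s t : Set ℝ) :
    volume {p : EuclideanSpace ℝ (Fin 2) | p 0 ∈ s ∧ p 1 ∈ t} = volume s * volume t := by
  have hemb : MeasurableEmbedding fun q : ℝ × ℝ => (!₂[q.1, q.2] : EuclideanSpace ℝ (Fin 2)) :=
    (MeasurableEquiv.finTwoArrow.symm.trans
      (MeasurableEquiv.toLp 2 (Fin 2 → ℝ))).measurableEmbedding
  rw [← measurePreserving_prod_euclideanSpace.measure_preimage_emb hemb]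
  exact Measure.prod_prod s t

theorem stmt_1 (d : ℝ) (hd : d > 0)
    (μ : Measure (ℝ × ℝ))
    (hμ : μ = volume.withDensity (fun p : ℝ × ℝ =>
      ENNReal.ofReal ((Set.Ioo 0 d ×ˢ Set.Ioo (-π) π).indicator
        (fun q : ℝ × ℝ => q.1 / (π * d ^ 2)) p)))
    (ν : Measure (EuclideanSpace ℝ (Fin 2)))
    (hν : ν = Measure.map
      (fun p : ℝ × ℝ => (WithLp.equiv 2 (Fin 2 → ℝ)).symm
        ![p.1 * Real.cos p.2, p.1 * Real.sin p.2]) μ)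
    (i j : ℝ)
    (hsub : {p : EuclideanSpace ℝ (Fin 2) |
        p 0 ∈ Set.Icc (i - 1/2) (i + 1/2) ∧ p 1 ∈ Set.Icc (j - 1/2) (j + 1/2)} ⊆
      {p : EuclideanSpace ℝ (Fin 2) | ‖p‖ < d}) :
    ν {p : EuclideanSpace ℝ (Fin 2) |
        p 0 ∈ Set.Icc (i - 1/2) (i + 1/2) ∧ p 1 ∈ Set.Icc (j - 1/2) (j + 1/2)} =
      ENNReal.ofReal (1 / (π * d ^ 2)) := by
  have hlength (x : ℝ) : volume (Set.Icc (x - 1 / 2) (x + 1 / 2)) = 1 := by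
    rw [Real.volume_Icc, add_sub_sub_cancel, add_halves, ENNReal.ofReal_one]
  have hlaw : ν = ENNReal.ofReal (1 / (π * d ^ 2)) • volume.restrict (Metric.ball 0 d) := by
    simp only [hν, hμ, div_eq_inv_mul, mul_one]
    exact map_euclideanPolar_withDensity_mul_fst (by positivity) d
  rw [← ball_zero_eq] at hsub
  rw [hlaw, Measure.smul_apply, Measure.restrict_eq_self _ hsub,
    volume_euclideanSpace_rectangle, hlength, hlength, one_mul, smul_eq_mul, mul_one]
end

section
/- For every real x > 1/2, 1/(x + 1/2) < arctan((x + 1/2)/(x − 1/2)) − arctan((x − 1/2)/(x + 1/2)) < 1/x. -/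
open Real

/-! With `t = (x + 1/2) / (x - 1/2)` the two angles are complementary, so their difference is twice
`arctan t - π / 4 = arctan ((t - 1) / (t + 1)) = arctan (1 / (2 * x))`. The bounds are then
`u / (1 + u) < arctan u < u` at `u = 1 / (2 * x)`, which follow from `sin θ < θ < tan θ` at
`θ = arctan u`. -/

theorem arctan_lt_self {u : ℝ} (hu : 0 < u) : arctan u < u := by
  simpa only [tan_arctan] using lt_tan (arctan_pos.2 hu) (arctan_lt_pi_div_two u)

theorem div_sqrt_one_add_sq_lt_arctan {u : ℝ} (hu : 0 < u) : u / √(1 + u ^ 2) < arctan u := by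
  simpa only [sin_arctan] using sin_lt (arctan_pos.2 hu)

theorem div_one_add_lt_arctan {u : ℝ} (hu : 0 < u) : u / (1 + u) < arctan u := by
  have hsqrt : √(1 + u ^ 2) < 1 + u := (sqrt_lt' (by positivity)).2 (by linarith [add_sq 1 u])
  calc u / (1 + u) < u / √(1 + u ^ 2) := div_lt_div_of_pos_left hu (by positivity) hsqrt
    _ < arctan u := div_sqrt_one_add_sq_lt_arctan hu

theorem arctan_sub {s t : ℝ} (h : -1 < s * t) :
    arctan s - arctan t = arctan ((s - t) / (1 + s * t)) := by
  have hneg : s * -t < 1 := by linarith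
  rw [sub_eq_add_neg, ← arctan_neg, arctan_add hneg, ← sub_eq_add_neg, mul_neg, sub_neg_eq_add]

theorem arctan_sub_pi_div_four {t : ℝ} (ht : -1 < t) :
    arctan t - π / 4 = arctan ((t - 1) / (t + 1)) := by
  rw [← arctan_one, arctan_sub (by rwa [mul_one]), mul_one, add_comm 1 t]

theorem arctan_sub_arctan_inv {t : ℝ} (ht : 0 < t) :
    arctan t - arctan t⁻¹ = 2 * arctan ((t - 1) / (t + 1)) := by
  rw [arctan_inv_of_pos ht, ← arctan_sub_pi_div_four (by linarith)]
  ring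

theorem arctan_div_sub_arctan_div_swap {a b : ℝ} (ha : 0 < a) (hb : 0 < b) :
    arctan (a / b) - arctan (b / a) = 2 * arctan ((a - b) / (a + b)) := by
  have hratio : (a / b - 1) / (a / b + 1) = (a - b) / (a + b) := by field_simp
  rw [← inv_div a b, arctan_sub_arctan_inv (div_pos ha hb), hratio]

theorem stmt_9 (x : ℝ) (hx : x > 1/2) :
    1 / (x + 1/2) <
        Real.arctan ((x + 1/2) / (x - 1/2)) - Real.arctan ((x - 1/2) / (x + 1/2)) ∧
      Real.arctan ((x + 1/2) / (x - 1/2)) - Real.arctan ((x - 1/2) / (x + 1/2)) < 1 / x := by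
  have : 0 < x := by linarith
  have hu : 0 < 1 / (2 * x) := by positivity
  have hratio : (x + 1/2 - (x - 1/2)) / (x + 1/2 + (x - 1/2)) = 1 / (2 * x) := by ring
  rw [arctan_div_sub_arctan_div_swap (by linarith) (by linarith), hratio]
  constructor
  · calc 1 / (x + 1/2) = 2 * (1 / (2 * x) / (1 + 1 / (2 * x))) := by field_simp
      _ < 2 * arctan (1 / (2 * x)) := by gcongr; exact div_one_add_lt_arctan hu
  · calc 2 * arctan (1 / (2 * x)) < 2 * (1 / (2 * x)) := by gcongr; exact arctan_lt_self hu
      _ = 1 / x := by field_simp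
end
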